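/- Let P ⊂ ℝ^n be a convex polytope as in the context, with n ≥ 2. For 0 ≤ i ≤ n−1 let f_{{i}} denote the number of i-dimensional proper faces of P, and for 0 ≤ i ≤ n−2 let f_{{i,n−1}} denote the number of pairs (G, F) where G and F are proper faces of P with G ⊆ F, dim G = i and dim F = n−1. Then f_{{n−1}} · (1 + (−1)^n) = Σ_{i=0}^{n−2} (−1)^i f_{{i,n−1}}. -/

import Mathlib

/-!
The relation is the sum, over all facets `F`, of Euler's relation
`∑_{G ⊆ F} (-1) ^ dim G = 1` for `F` (the sum running over all nonempty faces `G` of `F`, including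
`F` itself): moving the term of `F` to the other side leaves
`∑_{G ⊊ F} (-1) ^ dim G = 1 - (-1) ^ (n - 1) = 1 + (-1) ^ n`, and every face strictly contained in
`F` has dimension at most `n - 2` (`sdim_lt`).

Euler's relation (`euler_relation`, `euler_face`) is proved without induction on the dimension or
on the number of facets. For a relatively open convex polyhedron `C` put `χ(C) = (-1) ^ dim C`, and
`χ(∅) = 0`. Cutting `C` by a hyperplane into its three parts preserves `χ`
(`RelOpen.chi_cut`), because a genuine cut replaces `(-1) ^ d` by
`(-1) ^ d + (-1) ^ (d - 1) + (-1) ^ d`. Cutting by all hyperplanes that occur shows that `χ`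
respects every linear relation between indicator functions of such sets
(`RelOpen.chi_relation`).

Now fix a point `v` in the relative interior of a bounded polyhedron `F`. The relative interior of
`F` is the disjoint union of `{v}` and the open cones from `v` over the relative interiors of the
proper faces `G` of `F`; such a cone has dimension `dim G + 1` (`chi_openCone`). Hence
`(-1) ^ dim F = 1 - ∑_{G ⊊ F} (-1) ^ dim G`, which is Euler's relation. Boundedness is used to see
that each point other than `v` lies in one of the cones (`exists_ratio_lt_one`).
-/

noncomputable section
open scoped Classical

/-- The convex polytope `P = {x : ⟨a i, x⟩ + b i ≥ 0 for all i}` in `ℝⁿ`. -/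
def polytope (n m : ℕ) (a : Fin m → Fin n → ℝ) (b : Fin m → ℝ) : Set (Fin n → ℝ) :=
  {x | ∀ i, 0 ≤ (∑ j, a i j * x j) + b i}

/-- The `i`-th facet `F i = {x ∈ P : ⟨a i, x⟩ + b i = 0}`. -/
def facet (n m : ℕ) (a : Fin m → Fin n → ℝ) (b : Fin m → ℝ) (i : Fin m) : Set (Fin n → ℝ) :=
  {x | x ∈ polytope n m a b ∧ (∑ j, a i j * x j) + b i = 0}

/-- Dimension of the affine span of a subset of `ℝⁿ`. -/
def sdim {n : ℕ} (F : Set (Fin n → ℝ)) : ℕ :=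
  Module.finrank ℝ (affineSpan ℝ F).direction

/-- The face of `P` cut out by the facets indexed by `S` (`S = ∅` gives `P` itself). -/
def faceOf (n m : ℕ) (a : Fin m → Fin n → ℝ) (b : Fin m → ℝ) (S : Finset (Fin m)) :
    Set (Fin n → ℝ) :=
  polytope n m a b ∩ ⋂ i ∈ S, facet n m a b i

/-- The finset of all nonempty faces of `P` (including `P` itself). -/
def facesFinset (n m : ℕ) (a : Fin m → Fin n → ℝ) (b : Fin m → ℝ) :
    Finset (Set (Fin n → ℝ)) :=
  (Finset.univ.filter fun S : Finset (Fin m) => (faceOf n m a b S).Nonempty).image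
    (faceOf n m a b)

/-- `m(F)`: the number of facets of `P` containing `F`. -/
def mOf (n m : ℕ) (a : Fin m → Fin n → ℝ) (b : Fin m → ℝ) (F : Set (Fin n → ℝ)) : ℕ :=
  (Finset.univ.filter fun i => F ⊆ facet n m a b i).card

/-- The finset of all (nonempty) proper faces of `P`: the nonempty intersections
`⋂_{i ∈ S} F_i` for nonempty `S ⊆ {1,…,m}`. -/
def properFaces (n m : ℕ) (a : Fin m → Fin n → ℝ) (b : Fin m → ℝ) :
    Finset (Set (Fin n → ℝ)) :=
  (Finset.univ.filter fun S : Finset (Fin m) =>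
      S.Nonempty ∧ (faceOf n m a b S).Nonempty).image (faceOf n m a b)


/-! ### Euler characteristic of relatively open polyhedra -/

open Filter Topology

/-- `RelOpen C W` says that `C` is a relatively open convex polyhedron with direction space `W`
(the latter is determined by `C` as soon as `C` is nonempty). Polyhedrality is encoded by `det`:
membership in `C` depends only on the signs of finitely many affine functions. -/
structure RelOpen {n : ℕ} (C : Set (Fin n → ℝ)) (W : Submodule ℝ (Fin n → ℝ)) : Prop where
  convex : Convex ℝ C
  sub : ∀ x ∈ C, ∀ y ∈ C, y - x ∈ W
  op : ∀ x ∈ C, ∀ w ∈ W, ∀ᶠ t : ℝ in 𝓝[>] 0, x + t • w ∈ C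
  det : ∃ T : Finset ((Fin n → ℝ) →ᵃ[ℝ] ℝ), ∀ x y,
    (∀ f ∈ T, SignType.sign (f x) = SignType.sign (f y)) → x ∈ C → y ∈ C

/-- The Euler characteristic with compact support of a relatively open convex set: `(-1) ^ dim C`,
and `0` for the empty set. -/
def chi {n : ℕ} (C : Set (Fin n → ℝ)) : ℤ := if C.Nonempty then (-1) ^ sdim C else 0

lemma affine_add_smul {n : ℕ} (f : (Fin n → ℝ) →ᵃ[ℝ] ℝ) (x w : Fin n → ℝ) (t : ℝ) :
    f (x + t • w) = f x + t * f.linear w := by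
  have := f.map_vadd x (t • w)
  simp only [vadd_eq_add, map_smul, smul_eq_mul] at this
  rw [add_comm x, this, add_comm]

lemma affine_sub {n : ℕ} (f : (Fin n → ℝ) →ᵃ[ℝ] ℝ) (x y : Fin n → ℝ) :
    f.linear (y - x) = f y - f x := by
  simpa using f.linearMap_vsub y x

lemma affine_add_smul_sub {n : ℕ} (f : (Fin n → ℝ) →ᵃ[ℝ] ℝ) (x y : Fin n → ℝ) (t : ℝ) :
    f (x + t • (y - x)) = f x + t * (f y - f x) := by
  rw [affine_add_smul, affine_sub]

lemma finrank_inf_ker {n : ℕ} (W : Submodule ℝ (Fin n → ℝ)) (φ : (Fin n → ℝ) →ₗ[ℝ] ℝ)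
    (w : Fin n → ℝ) (hw : w ∈ W) (hφ : φ w ≠ 0) :
    Module.finrank ℝ (W ⊓ LinearMap.ker φ : Submodule ℝ (Fin n → ℝ)) + 1
      = Module.finrank ℝ W := by
  have h0 : φ.domRestrict W ≠ 0 := fun h => hφ (by simpa using LinearMap.congr_fun h ⟨w, hw⟩)
  have h1 := Module.Dual.finrank_ker_add_one_of_ne_zero (f := φ.domRestrict W) h0
  rw [← h1]
  congr 1
  rw [← Submodule.finrank_map_subtype_eq W (LinearMap.ker (φ.domRestrict W))]
  suffices h : W ⊓ LinearMap.ker φ = (LinearMap.ker (φ.domRestrict W)).map W.subtype by rw [h]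
  ext x
  simp only [Submodule.mem_inf, LinearMap.mem_ker, Submodule.mem_map, Submodule.subtype_apply,
    Subtype.exists]
  constructor
  · rintro ⟨h1, h2⟩
    exact ⟨x, h1, by simpa using h2, rfl⟩
  · rintro ⟨y, h1, h2, rfl⟩
    exact ⟨h1, by simpa using h2⟩

/-- Criterion for a subspace to be the direction of the affine span of a set `C`: it contains all
differences, and at one point of `C` one can move a little inside `C` along every vector of it. -/
lemma direction_eq_of {n : ℕ} {C : Set (Fin n → ℝ)} {W : Submodule ℝ (Fin n → ℝ)} (x : Fin n → ℝ)
    (hx : x ∈ C) (hsub : ∀ x ∈ C, ∀ y ∈ C, y - x ∈ W)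
    (hop : ∀ w ∈ W, ∀ᶠ t : ℝ in 𝓝[>] 0, x + t • w ∈ C) :
    (affineSpan ℝ C).direction = W := by
  rw [direction_affineSpan]
  apply le_antisymm
  · rw [vectorSpan_def, Submodule.span_le]
    rintro _ ⟨y, hy, z, hz, rfl⟩
    exact hsub z hz y hy
  · intro w hw
    obtain ⟨t, ht, ht0⟩ := ((hop w hw).and self_mem_nhdsWithin).exists
    have h := vsub_mem_vectorSpan ℝ ht hx
    simp only [vsub_eq_sub, add_sub_cancel_left] at h
    have h2 := Submodule.smul_mem _ t⁻¹ h
    rwa [smul_smul, inv_mul_cancel₀ (ne_of_gt ht0), one_smul] at h2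

namespace RelOpen

variable {n : ℕ}

lemma chi_eq {C : Set (Fin n → ℝ)} {W : Submodule ℝ (Fin n → ℝ)} (h : RelOpen C W)
    (hC : C.Nonempty) : chi C = (-1) ^ Module.finrank ℝ W := by
  obtain ⟨x, hx⟩ := hC
  rw [chi, if_pos ⟨x, hx⟩, sdim, direction_eq_of x hx h.sub (h.op x hx)]

lemma congr {C D : Set (Fin n → ℝ)} {W : Submodule ℝ (Fin n → ℝ)} (h : RelOpen C W)
    (e : ∀ x, x ∈ D ↔ x ∈ C) : RelOpen D W := by
  rwa [Set.ext e]

lemma inter {C D : Set (Fin n → ℝ)} {W U : Submodule ℝ (Fin n → ℝ)} (h : RelOpen C W)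
    (h' : RelOpen D U) : RelOpen (C ∩ D) (W ⊓ U) where
  convex := h.convex.inter h'.convex
  sub x hx y hy := ⟨h.sub x hx.1 y hy.1, h'.sub x hx.2 y hy.2⟩
  op x hx w hw := (h.op x hx.1 w hw.1).and (h'.op x hx.2 w hw.2)
  det := by
    obtain ⟨T, hT⟩ := h.det
    obtain ⟨T', hT'⟩ := h'.det
    refine ⟨T ∪ T', fun x y hxy hx => ⟨hT x y (fun f hf => hxy f (by simp [hf])) hx.1,
      hT' x y (fun f hf => hxy f (by simp [hf])) hx.2⟩⟩

lemma univ : RelOpen (Set.univ : Set (Fin n → ℝ)) ⊤ where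
  convex := convex_univ
  sub := by simp
  op := by simp
  det := ⟨∅, by simp⟩

lemma iInter {ι : Type} [Fintype ι] {C : ι → Set (Fin n → ℝ)}
    {W : ι → Submodule ℝ (Fin n → ℝ)} (h : ∀ i, RelOpen (C i) (W i)) :
    RelOpen {x | ∀ i, x ∈ C i} (⨅ i, W i) where
  convex := by
    intro x hx y hy s t hs ht hst i
    exact (h i).convex (hx i) (hy i) hs ht hst
  sub x hx y hy := by
    rw [Submodule.mem_iInf]
    exact fun i => (h i).sub x (hx i) y (hy i)
  op x hx w hw := by
    rw [Submodule.mem_iInf] at hw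
    exact eventually_all.2 fun i => (h i).op x (hx i) w (hw i)
  det := by
    choose T hT using fun i => (h i).det
    refine ⟨Finset.univ.biUnion T, fun x y hxy hx i => hT i x y (fun f hf => hxy f ?_) (hx i)⟩
    exact Finset.mem_biUnion.2 ⟨i, Finset.mem_univ i, hf⟩

lemma imp (q : Prop) {C : Set (Fin n → ℝ)} {W : Submodule ℝ (Fin n → ℝ)} (h : RelOpen C W) :
    RelOpen {x | q → x ∈ C} (if q then W else ⊤) := by
  by_cases hq : q
  · simpa [hq] using h
  · simpa [hq] using univ

lemma zero (f : (Fin n → ℝ) →ᵃ[ℝ] ℝ) :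
    RelOpen {x | f x = 0} (LinearMap.ker f.linear) where
  convex := (convex_singleton (0 : ℝ)).affine_preimage f
  sub x hx y hy := by
    simp only [Set.mem_ofPred_eq] at hx hy
    rw [LinearMap.mem_ker, affine_sub, hx, hy, sub_zero]
  op x hx w hw := by
    simp only [Set.mem_ofPred_eq] at hx ⊢
    rw [LinearMap.mem_ker] at hw
    simp [affine_add_smul, hx, hw]
  det := ⟨{f}, fun x y hxy hx => by
    have := hxy f (by simp)
    simp only [Set.mem_ofPred_eq] at hx ⊢
    rw [hx, sign_zero] at this
    exact sign_eq_zero_iff.1 this.symm⟩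

lemma pos (f : (Fin n → ℝ) →ᵃ[ℝ] ℝ) : RelOpen {x | 0 < f x} ⊤ where
  convex := (convex_Ioi (0 : ℝ)).affine_preimage f
  sub := by simp
  op x hx w _ := by
    simp only [Set.mem_ofPred_eq, affine_add_smul] at hx ⊢
    have : Tendsto (fun t : ℝ => f x + t * f.linear w) (𝓝[>] 0) (𝓝 (f x + 0 * f.linear w)) :=
      (Continuous.tendsto (by fun_prop) 0).mono_left nhdsWithin_le_nhds
    exact this.eventually (lt_mem_nhds (by simpa using hx))
  det := ⟨{f}, fun x y hxy hx => by
    have := hxy f (by simp)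
    simp only [Set.mem_ofPred_eq] at hx ⊢
    rw [sign_pos hx] at this
    exact sign_eq_one_iff.1 this.symm⟩

lemma neg (f : (Fin n → ℝ) →ᵃ[ℝ] ℝ) : RelOpen {x | f x < 0} ⊤ := by
  simpa using pos (-f)

/-- Additivity of the Euler characteristic under cutting by one hyperplane. -/
lemma chi_cut {C : Set (Fin n → ℝ)} {W : Submodule ℝ (Fin n → ℝ)} (h : RelOpen C W)
    (f : (Fin n → ℝ) →ᵃ[ℝ] ℝ) :
    chi C = chi (C ∩ {x | f x < 0}) + chi (C ∩ {x | f x = 0}) + chi (C ∩ {x | 0 < f x}) := by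
  have hempty : chi (∅ : Set (Fin n → ℝ)) = 0 := by simp [chi]
  by_cases hboth : (∃ x ∈ C, f x < 0) ∧ ∃ y ∈ C, 0 < f y
  · obtain ⟨⟨x, hx, hfx⟩, y, hy, hfy⟩ := hboth
    have hd : 0 < f y - f x := by linarith
    have hz : x + (-f x / (f y - f x)) • (y - x) ∈ C ∩ {x | f x = 0} := by
      refine ⟨h.convex.add_smul_sub_mem hx hy ⟨by apply div_nonneg <;> linarith, ?_⟩, ?_⟩
      · rw [div_le_one hd]; linarith
      · simp only [Set.mem_ofPred_eq, affine_add_smul_sub]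
        field_simp
        ring
    rw [(h.inter (neg f)).chi_eq ⟨x, hx, hfx⟩, (h.inter (pos f)).chi_eq ⟨y, hy, hfy⟩,
      (h.inter (zero f)).chi_eq ⟨_, hz⟩, h.chi_eq ⟨x, hx⟩,
      ← finrank_inf_ker W f.linear (y - x) (h.sub x hx y hy) (by rw [affine_sub]; exact hd.ne'),
      inf_top_eq, ← finrank_inf_ker W f.linear (y - x) (h.sub x hx y hy)
        (by rw [affine_sub]; exact hd.ne')]
    ring
  by_cases hzero : ∃ x ∈ C, f x = 0
  · obtain ⟨x, hx, hfx⟩ := hzero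
    -- Relative openness lets one pass slightly beyond `x`, where `f` changes sign.
    have hall : ∀ y ∈ C, f y = 0 := by
      intro y hy
      by_contra hne
      obtain ⟨t, ht, ht0⟩ :=
        ((h.op x hx (x - y) (h.sub y hy x hx)).and self_mem_nhdsWithin).exists
      have ht0 : 0 < t := ht0
      have hv : f (x + t • (x - y)) = - (t * f y) := by
        rw [affine_add_smul, affine_sub, hfx]; ring
      apply hboth
      rcases lt_or_gt_of_ne hne with h1 | h1
      · exact ⟨⟨y, hy, h1⟩, _, ht, by rw [hv]; nlinarith⟩
      · exact ⟨⟨_, ht, by rw [hv]; nlinarith⟩, y, hy, h1⟩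
    have e1 : C ∩ {x | f x < 0} = ∅ := by
      ext y; simp only [Set.mem_inter_iff, Set.mem_ofPred_eq, Set.mem_empty_iff_false, iff_false]
      rintro ⟨h1, h2⟩; linarith [hall y h1]
    have e2 : C ∩ {x | 0 < f x} = ∅ := by
      ext y; simp only [Set.mem_inter_iff, Set.mem_ofPred_eq, Set.mem_empty_iff_false, iff_false]
      rintro ⟨h1, h2⟩; linarith [hall y h1]
    have e3 : C ∩ {x | f x = 0} = C := Set.inter_eq_left.2 hall
    rw [e1, e2, e3, hempty]; ring
  have e3 : C ∩ {x | f x = 0} = ∅ := by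
    ext y; simp only [Set.mem_inter_iff, Set.mem_ofPred_eq, Set.mem_empty_iff_false, iff_false]
    rintro ⟨h1, h2⟩; exact hzero ⟨y, h1, h2⟩
  by_cases hneg : ∃ x ∈ C, f x < 0
  · have e1 : C ∩ {x | 0 < f x} = ∅ := by
      ext y; simp only [Set.mem_inter_iff, Set.mem_ofPred_eq, Set.mem_empty_iff_false, iff_false]
      rintro ⟨h1, h2⟩; exact hboth ⟨hneg, y, h1, h2⟩
    have e2 : C ∩ {x | f x < 0} = C := Set.inter_eq_left.2 fun y hy => by
      by_contra hc
      rcases eq_or_lt_of_le (not_lt.1 (show ¬ (_ : ℝ) < _ from hc)) with h1 | h1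
      · exact hzero ⟨y, hy, h1.symm⟩
      · exact hboth ⟨hneg, y, hy, h1⟩
    rw [e1, e2, e3, hempty]; ring
  · have e1 : C ∩ {x | f x < 0} = ∅ := by
      ext y; simp only [Set.mem_inter_iff, Set.mem_ofPred_eq, Set.mem_empty_iff_false, iff_false]
      rintro ⟨h1, h2⟩; exact hneg ⟨y, h1, h2⟩
    have e2 : C ∩ {x | 0 < f x} = C := Set.inter_eq_left.2 fun y hy => by
      by_contra hc
      rcases eq_or_lt_of_le (not_lt.1 (show ¬ (_ : ℝ) < _ from hc)) with h1 | h1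
      · exact hzero ⟨y, hy, h1⟩
      · exact hneg ⟨y, hy, h1⟩
    rw [e1, e2, e3, hempty]; ring

/-- Induction behind `chi_relation`: `K` is a piece cut out by the hyperplanes already used, and
`T` holds affine functions whose signs decide membership in the `C i` inside `K`. -/
lemma chi_relation_aux {ι : Type} [Fintype ι] {C : ι → Set (Fin n → ℝ)}
    {W : ι → Submodule ℝ (Fin n → ℝ)} (h : ∀ i, RelOpen (C i) (W i)) (w : ι → ℤ)
    (hw : ∀ x, ∑ i, (if x ∈ C i then w i else 0) = 0)
    (T : Finset ((Fin n → ℝ) →ᵃ[ℝ] ℝ)) :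
    ∀ (K : Set (Fin n → ℝ)) (U : Submodule ℝ (Fin n → ℝ)), RelOpen K U →
      (∀ i, ∀ x ∈ K, ∀ y ∈ K, (∀ f ∈ T, SignType.sign (f x) = SignType.sign (f y)) →
        x ∈ C i → y ∈ C i) → ∑ i, w i * chi (K ∩ C i) = 0 := by
  induction T using Finset.induction_on with
  | empty =>
    intro K U hK hT
    rcases K.eq_empty_or_nonempty with rfl | ⟨x, hx⟩
    · simp [chi]
    · have : ∀ i, w i * chi (K ∩ C i) = (if x ∈ C i then w i else 0) * chi K := by
        intro i
        split_ifs with hi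
        · rw [Set.inter_eq_left.2 fun y hy => hT i x hx y hy (by simp) hi]
        · have : K ∩ C i = ∅ := by
            ext y
            simp only [Set.mem_inter_iff, Set.mem_empty_iff_false, iff_false]
            rintro ⟨h1, h2⟩
            exact hi (hT i y h1 x hx (by simp) h2)
          simp [this, chi]
      simp_rw [this, ← Finset.sum_mul, hw x, zero_mul]
  | insert f T _ ih =>
    intro K U hK hT
    have hcut : ∀ i, w i * chi (K ∩ C i) = w i * chi ((K ∩ {x | f x < 0}) ∩ C i)
        + w i * chi ((K ∩ {x | f x = 0}) ∩ C i) + w i * chi ((K ∩ {x | 0 < f x}) ∩ C i) := by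
      intro i
      rw [(hK.inter (h i)).chi_cut f, Set.inter_right_comm, Set.inter_right_comm K (C i),
        Set.inter_right_comm K (C i)]
      ring
    simp_rw [hcut, Finset.sum_add_distrib]
    rw [ih _ _ (hK.inter (neg f)), ih _ _ (hK.inter (zero f)), ih _ _ (hK.inter (pos f))]
    · simp
    · rintro i x ⟨hx, hfx⟩ y ⟨hy, hfy⟩ hs
      refine hT i x hx y hy (Finset.forall_mem_insert _ _ _ |>.2 ⟨?_, hs⟩)
      rw [sign_pos hfx, sign_pos hfy]
    · rintro i x ⟨hx, hfx⟩ y ⟨hy, hfy⟩ hs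
      refine hT i x hx y hy (Finset.forall_mem_insert _ _ _ |>.2 ⟨?_, hs⟩)
      simp only [Set.mem_ofPred_eq] at hfx hfy
      rw [hfx, hfy]
    · rintro i x ⟨hx, hfx⟩ y ⟨hy, hfy⟩ hs
      refine hT i x hx y hy (Finset.forall_mem_insert _ _ _ |>.2 ⟨?_, hs⟩)
      rw [sign_neg hfx, sign_neg hfy]

/-- The Euler characteristic is well defined on the group generated by indicator functions of
relatively open polyhedra: every linear relation between the indicators holds between the
Euler characteristics. -/
lemma chi_relation {ι : Type} [Fintype ι] {C : ι → Set (Fin n → ℝ)}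
    {W : ι → Submodule ℝ (Fin n → ℝ)} (h : ∀ i, RelOpen (C i) (W i)) (w : ι → ℤ)
    (hw : ∀ x, ∑ i, (if x ∈ C i then w i else 0) = 0) :
    ∑ i, w i * chi (C i) = 0 := by
  choose T hT using fun i => (h i).det
  have := chi_relation_aux h w hw (Finset.univ.biUnion T) Set.univ ⊤ univ
    (fun i x _ y _ hxy hx => hT i x y
      (fun f hf => hxy f (Finset.mem_biUnion.2 ⟨i, Finset.mem_univ i, hf⟩)) hx)
  simpa using this

end RelOpen

/-! ### Euler's relation for a bounded polyhedron -/

/-- The set where exactly the functions indexed by `B` vanish and the others are positive: the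
relative interior of the face of `{ℓ ≥ 0}` with active set `B`, or empty. -/
def cell {n m : ℕ} (ℓ : Fin m → (Fin n → ℝ) →ᵃ[ℝ] ℝ) (B : Finset (Fin m)) :
    Set (Fin n → ℝ) :=
  {x | (∀ i ∈ B, ℓ i x = 0) ∧ ∀ i ∉ B, 0 < ℓ i x}

/-- The affine function `ℓ i` rescaled to take the value `1` at `v` (for `ℓ i v ≠ 0`). -/
def ratio {n m : ℕ} (ℓ : Fin m → (Fin n → ℝ) →ᵃ[ℝ] ℝ) (v : Fin n → ℝ) (i : Fin m) :
    (Fin n → ℝ) →ᵃ[ℝ] ℝ := (ℓ i v)⁻¹ • ℓ i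

/-- For `v ∈ cell ℓ B₀` and `B₀ ⊂ B`, this is the union of the open segments from `v` to the points
of `cell ℓ B`, described by inequalities: among the ratios `ℓ i / ℓ i v` with `i ∉ B₀`, the minimum
lies in `(0, 1)` and is attained exactly for `i ∈ B \ B₀`. -/
def openCone {n m : ℕ} (ℓ : Fin m → (Fin n → ℝ) →ᵃ[ℝ] ℝ) (v : Fin n → ℝ)
    (B₀ B : Finset (Fin m)) : Set (Fin n → ℝ) :=
  {x | (∀ i ∈ B₀, ℓ i x = 0) ∧ ∀ i ∈ B \ B₀, 0 < ratio ℓ v i x ∧ ratio ℓ v i x < 1 ∧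
    (∀ j ∈ B \ B₀, ratio ℓ v j x = ratio ℓ v i x) ∧ ∀ k ∉ B, ratio ℓ v i x < ratio ℓ v k x}

section Euler

variable {n m : ℕ} (ℓ : Fin m → (Fin n → ℝ) →ᵃ[ℝ] ℝ)

lemma relOpen_cell (B : Finset (Fin m)) :
    ∃ W, RelOpen (cell ℓ B) W ∧ ∀ w, w ∈ W ↔ ∀ i ∈ B, (ℓ i).linear w = 0 := by
  refine ⟨_, (RelOpen.iInter fun i => (RelOpen.zero (ℓ i)).imp (i ∈ B)).inter
    (RelOpen.iInter fun i => (RelOpen.pos (ℓ i)).imp (i ∉ B)), fun w => ?_⟩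
  simp only [Submodule.mem_inf, Submodule.mem_iInf]
  constructor
  · intro h i hi
    simpa [hi] using h.1 i
  · intro h
    refine ⟨fun i => ?_, fun i => ?_⟩
    · split_ifs with hi
      · exact h i hi
      · trivial
    · split_ifs <;> trivial

lemma relOpen_openCone (v : Fin n → ℝ) (B₀ B : Finset (Fin m)) :
    ∃ W, RelOpen (openCone ℓ v B₀ B) W ∧ ∀ w, w ∈ W ↔ (∀ i ∈ B₀, (ℓ i).linear w = 0) ∧
      ∀ i ∈ B \ B₀, ∀ j ∈ B \ B₀, (ratio ℓ v j).linear w = (ratio ℓ v i).linear w := by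
  have key := (RelOpen.iInter fun i => (RelOpen.zero (ℓ i)).imp (i ∈ B₀)).inter
    (RelOpen.iInter fun i => ((RelOpen.pos (ratio ℓ v i)).inter
      ((RelOpen.pos (AffineMap.const ℝ (Fin n → ℝ) 1 - ratio ℓ v i)).inter
      ((RelOpen.iInter fun j =>
        (RelOpen.zero (ratio ℓ v j - ratio ℓ v i)).imp (j ∈ B \ B₀)).inter
      (RelOpen.iInter fun k =>
        (RelOpen.pos (ratio ℓ v k - ratio ℓ v i)).imp (k ∉ B))))).imp (i ∈ B \ B₀))
  refine ⟨_, key.congr fun x => ?_, fun w => ?_⟩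
  · simp [openCone, sub_eq_zero]
  · simp only [Submodule.mem_inf, Submodule.mem_iInf]
    constructor
    · rintro ⟨h1, h2⟩
      refine ⟨fun i hi => by simpa [hi] using h1 i, fun i hi j hj => ?_⟩
      have := h2 i
      rw [if_pos hi] at this
      simp only [Submodule.mem_inf, Submodule.mem_iInf] at this
      have := this.2.2.1 j
      rw [if_pos hj] at this
      simpa [sub_eq_zero] using this
    · rintro ⟨h1, h2⟩
      refine ⟨fun i => ?_, fun i => ?_⟩
      · split_ifs with hi
        · exact h1 i hi
        · trivial
      · split_ifs with hi
        · simp only [Submodule.mem_inf, Submodule.mem_iInf]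
          refine ⟨trivial, trivial, fun j => ?_, fun k => by split_ifs <;> trivial⟩
          split_ifs with hj
          · simpa [sub_eq_zero] using h2 i hi j hj
          · trivial
        · trivial

lemma relOpen_singleton (v : Fin n → ℝ) : ∃ W, RelOpen {v} W := by
  refine ⟨_, (RelOpen.iInter fun j : Fin n => RelOpen.zero
    ((LinearMap.proj j : (Fin n → ℝ) →ₗ[ℝ] ℝ).toAffineMap -
      AffineMap.const ℝ _ (v j))).congr fun x => ?_⟩
  simp [sub_eq_zero, funext_iff]

variable {ℓ} {v : Fin n → ℝ} {B₀ : Finset (Fin m)} (hv : v ∈ cell ℓ B₀)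
include hv

lemma ratio_self {i : Fin m} (hi : i ∉ B₀) : ratio ℓ v i v = 1 := by
  simp [ratio, inv_mul_cancel₀ (hv.2 i hi).ne']

lemma ratio_eq_zero {i : Fin m} (hi : i ∉ B₀) (x : Fin n → ℝ) :
    ratio ℓ v i x = 0 ↔ ℓ i x = 0 := by
  simp [ratio, (hv.2 i hi).ne']

lemma ratio_pos {i : Fin m} (hi : i ∉ B₀) (x : Fin n → ℝ) :
    0 < ratio ℓ v i x ↔ 0 < ℓ i x := by
  simp only [ratio, AffineMap.coe_smul, Pi.smul_apply, smul_eq_mul]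
  exact mul_pos_iff_of_pos_left (inv_pos.2 (hv.2 i hi))

lemma openCone_subset {B : Finset (Fin m)} (hB : B₀ ⊂ B) : openCone ℓ v B₀ B ⊆ cell ℓ B₀ := by
  obtain ⟨i, hi, hi0⟩ := Finset.exists_of_ssubset hB
  rintro x ⟨h1, h2⟩
  refine ⟨h1, fun k hk => ?_⟩
  rw [← ratio_pos hv hk]
  by_cases hkB : k ∈ B
  · exact (h2 k (Finset.mem_sdiff.2 ⟨hkB, hk⟩)).1
  · have := h2 i (Finset.mem_sdiff.2 ⟨hi, hi0⟩)
    exact this.1.trans (this.2.2.2 k hkB)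

/-- The open cone over a cell has dimension one more than the cell. -/
lemma chi_openCone {B : Finset (Fin m)} (hB : B₀ ⊂ B) :
    chi (openCone ℓ v B₀ B) = - chi (cell ℓ B) := by
  obtain ⟨i, hi, hi0⟩ := Finset.exists_of_ssubset hB
  have hiB : i ∈ B \ B₀ := Finset.mem_sdiff.2 ⟨hi, hi0⟩
  obtain ⟨W, hW, hWm⟩ := relOpen_cell ℓ B
  obtain ⟨U, hU, hUm⟩ := relOpen_openCone ℓ v B₀ B
  rcases (cell ℓ B).eq_empty_or_nonempty with he | ⟨g, hg⟩
  · have : openCone ℓ v B₀ B = ∅ := by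
      by_contra hne
      obtain ⟨x, hx⟩ := Set.nonempty_iff_ne_empty.2 hne
      obtain ⟨hp, hl, -, -⟩ := hx.2 i hiB
      set r := ratio ℓ v i x with hr
      have hr1 : 0 < 1 - r := by linarith
      -- The ray from `v` through `x` hits `cell ℓ B` at the parameter where the minimal ratio,
      -- which equals `1 + t * (r - 1)`, vanishes.
      have hmem : v + (1 - r)⁻¹ • (x - v) ∈ cell ℓ B := by
        have hval : ∀ k, k ∉ B₀ → ratio ℓ v k (v + (1 - r)⁻¹ • (x - v)) =
            (ratio ℓ v k x - r) * (1 - r)⁻¹ := by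
          intro k hk
          rw [affine_add_smul_sub, ratio_self hv hk]
          field_simp
          ring
        refine ⟨fun k hk => ?_, fun k hk => ?_⟩
        · by_cases hk0 : k ∈ B₀
          · rw [affine_add_smul_sub, hv.1 k hk0, hx.1 k hk0]; simp
          · rw [← ratio_eq_zero hv hk0, hval k hk0,
              (hx.2 i hiB).2.2.1 k (Finset.mem_sdiff.2 ⟨hk, hk0⟩)]
            simp [hr]
        · have hk0 : k ∉ B₀ := fun h => hk (hB.1 h)
          rw [← ratio_pos hv hk0, hval k hk0]
          exact mul_pos (sub_pos.2 ((hx.2 i hiB).2.2.2 k hk)) (inv_pos.2 hr1)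
      rw [he] at hmem
      exact hmem
    simp [this, he, chi]
  · have hg0 : ∀ k ∈ B \ B₀, ratio ℓ v k g = 0 := fun k hk =>
      (ratio_eq_zero hv (Finset.mem_sdiff.1 hk).2 g).2 (hg.1 k (Finset.mem_sdiff.1 hk).1)
    have hmid : v + (1 / 2 : ℝ) • (g - v) ∈ openCone ℓ v B₀ B := by
      have hval : ∀ k, k ∉ B₀ → ratio ℓ v k (v + (1 / 2 : ℝ) • (g - v)) =
          1 / 2 + ratio ℓ v k g / 2 := by
        intro k hk
        rw [affine_add_smul_sub, ratio_self hv hk]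
        ring
      refine ⟨fun k hk => ?_, fun k hk => ?_⟩
      · rw [affine_add_smul_sub, hv.1 k hk, hg.1 k (hB.1 hk)]; simp
      · rw [hval k (Finset.mem_sdiff.1 hk).2, hg0 k hk]
        refine ⟨by norm_num, by norm_num, fun j hj => ?_, fun j hj => ?_⟩
        · rw [hval j (Finset.mem_sdiff.1 hj).2, hg0 j hj]
        · have hj0 : j ∉ B₀ := fun h => hj (hB.1 h)
          rw [hval j hj0]
          have := (ratio_pos hv hj0 g).2 (hg.2 j hj)
          linarith
    have hlin : ∀ k, k ∉ B₀ → ∀ w, ((ratio ℓ v k).linear w = 0 ↔ (ℓ k).linear w = 0) := by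
      intro k hk w
      simp [ratio, (hv.2 k hk).ne']
    have hWU : W = U ⊓ LinearMap.ker (ratio ℓ v i).linear := by
      ext w
      rw [Submodule.mem_inf, hWm, hUm, LinearMap.mem_ker]
      constructor
      · intro h
        have h0 : ∀ k ∈ B \ B₀, (ratio ℓ v k).linear w = 0 := fun k hk =>
          (hlin k (Finset.mem_sdiff.1 hk).2 w).2 (h k (Finset.mem_sdiff.1 hk).1)
        exact ⟨⟨fun k hk => h k (hB.1 hk), fun k hk j hj => by rw [h0 k hk, h0 j hj]⟩, h0 i hiB⟩
      · rintro ⟨⟨h1, h2⟩, h3⟩ k hk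
        by_cases hk0 : k ∈ B₀
        · exact h1 k hk0
        · rw [← hlin k hk0, h2 i hiB k (Finset.mem_sdiff.2 ⟨hk, hk0⟩), h3]
    have hdiff : v - g ∈ U := by
      rw [hUm]
      refine ⟨fun k hk => ?_, fun k hk j hj => ?_⟩
      · rw [affine_sub, hv.1 k hk, hg.1 k (hB.1 hk), sub_zero]
      · rw [affine_sub, affine_sub, hg0 k hk, hg0 j hj, ratio_self hv (Finset.mem_sdiff.1 hk).2,
          ratio_self hv (Finset.mem_sdiff.1 hj).2]
    rw [hU.chi_eq ⟨_, hmid⟩, hW.chi_eq ⟨g, hg⟩, hWU,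
      ← finrank_inf_ker U (ratio ℓ v i).linear (v - g) hdiff
        (by rw [affine_sub, ratio_self hv hi0, hg0 i hiB]; norm_num)]
    ring

/-- Boundedness enters here: a point `x ≠ v` at which the functions indexed by `B₀` vanish has some
ratio below `1`, as otherwise the whole
ray from `v` through it would stay in the polyhedron. -/
lemma exists_ratio_lt_one {R : ℝ}
    (hR : ∀ x, (∀ i, 0 ≤ ℓ i x) → (∀ i ∈ B₀, ℓ i x = 0) → ‖x‖ ≤ R)
    {x : Fin n → ℝ} (hx : ∀ i ∈ B₀, ℓ i x = 0) (hxv : x ≠ v) :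
    ∃ i, i ∉ B₀ ∧ ratio ℓ v i x < 1 := by
  by_contra! hcon
  have hray : ∀ t : ℝ, 0 ≤ t → ‖v + t • (x - v)‖ ≤ R := by
    intro t ht
    apply hR
    · intro i
      by_cases hi : i ∈ B₀
      · rw [affine_add_smul_sub, hx i hi, hv.1 i hi]; simp
      · apply le_of_lt
        rw [← ratio_pos hv hi, affine_add_smul_sub, ratio_self hv hi]
        have := mul_nonneg ht (sub_nonneg.2 (hcon i hi))
        linarith
    · intro i hi
      rw [affine_add_smul_sub, hx i hi, hv.1 i hi]; simp
  have hpos : 0 < ‖x - v‖ := norm_pos_iff.2 (sub_ne_zero.2 hxv)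
  have hR0 : 0 ≤ R := (norm_nonneg _).trans (hray 0 le_rfl)
  have ht : 0 ≤ (R + ‖v‖ + 1) / ‖x - v‖ := by positivity
  have h1 := hray _ ht
  have h2 := norm_sub_norm_le (((R + ‖v‖ + 1) / ‖x - v‖) • (x - v)) (-v)
  rw [sub_neg_eq_add, add_comm _ v, norm_neg, norm_smul, Real.norm_of_nonneg ht,
    div_mul_cancel₀ _ hpos.ne'] at h2
  linarith

/-- The Euler relation for a bounded polyhedron, with faces replaced by their relative interiors.
The cell `cell ℓ B₀` is the disjoint union of `{v}` and the open cones from `v` over the other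
cells, each of which has the opposite Euler characteristic of the cell it is built on. -/
lemma euler_relation {R : ℝ}
    (hR : ∀ x, (∀ i, 0 ≤ ℓ i x) → (∀ i ∈ B₀, ℓ i x = 0) → ‖x‖ ≤ R) :
    ∑ B ∈ Finset.univ.filter (fun B => B₀ ⊆ B), chi (cell ℓ B) = 1 := by
  obtain ⟨Wv, hWv⟩ := relOpen_singleton v
  obtain ⟨W₀, hW₀, -⟩ := relOpen_cell ℓ B₀
  choose W hW _ using relOpen_openCone ℓ v B₀
  let C : Option (Option (Finset (Fin m))) → Set (Fin n → ℝ) := fun o =>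
    o.elim {v} fun o => o.elim (cell ℓ B₀) fun B => openCone ℓ v B₀ B
  let V : Option (Option (Finset (Fin m))) → Submodule ℝ (Fin n → ℝ) := fun o =>
    o.elim Wv fun o => o.elim W₀ W
  let c : Option (Option (Finset (Fin m))) → ℤ := fun o =>
    o.elim 1 fun o => o.elim (-1) fun B => if B₀ ⊂ B then 1 else 0
  have hC : ∀ o, RelOpen (C o) (V o) := by
    rintro (_ | _ | B)
    · exact hWv
    · exact hW₀
    · exact hW B
  have hpt : ∀ x, (if x ∈ ({v} : Set (Fin n → ℝ)) then (1 : ℤ) else 0) +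
      ((if x ∈ cell ℓ B₀ then -1 else 0) + ∑ B, if x ∈ openCone ℓ v B₀ B then
        (if B₀ ⊂ B then 1 else 0) else 0) = 0 := by
    intro x
    by_cases hx : x ∈ cell ℓ B₀
    · by_cases hxv : x = v
      · subst hxv
        rw [if_pos (Set.mem_singleton x), if_pos hx, Finset.sum_eq_zero]
        · norm_num
        · intro B _
          split_ifs with h1 h2
          · exfalso
            obtain ⟨i, hi, hi0⟩ := Finset.exists_of_ssubset h2
            have := (h1.2 i (Finset.mem_sdiff.2 ⟨hi, hi0⟩)).2.1
            rw [ratio_self hv hi0] at this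
            exact lt_irrefl _ this
          · rfl
          · rfl
      · rw [if_neg (fun h : x ∈ ({v} : Set (Fin n → ℝ)) => hxv h), if_pos hx]
        obtain ⟨i, hi0, hi1⟩ := exists_ratio_lt_one hv hR hx.1 hxv
        obtain ⟨j, hj, hjmin⟩ := Finset.exists_min_image B₀ᶜ (fun i => ratio ℓ v i x)
          ⟨i, Finset.mem_compl.2 hi0⟩
        have hj0 : j ∉ B₀ := Finset.mem_compl.1 hj
        have hj1 : ratio ℓ v j x < 1 := (hjmin i (Finset.mem_compl.2 hi0)).trans_lt hi1
        -- The only open cone containing `x` is the one over the face where the minimal ratio is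
        -- attained.
        let A : Finset (Fin m) :=
          Finset.univ.filter fun k => k ∈ B₀ ∨ ratio ℓ v k x = ratio ℓ v j x
        have hA : ∀ k, k ∈ A ↔ k ∈ B₀ ∨ ratio ℓ v k x = ratio ℓ v j x := by simp [A]
        have hAss : B₀ ⊂ A := by
          refine Finset.ssubset_iff_of_subset (fun k hk => (hA k).2 (Or.inl hk)) |>.2
            ⟨j, (hA j).2 (Or.inr rfl), hj0⟩
        have hAm : ∀ k ∈ A \ B₀, ratio ℓ v k x = ratio ℓ v j x := fun k hk =>
          ((hA k).1 (Finset.mem_sdiff.1 hk).1).resolve_left (Finset.mem_sdiff.1 hk).2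
        rw [Finset.sum_eq_single A]
        · rw [if_pos, if_pos hAss]
          · norm_num
          · refine ⟨hx.1, fun k hk => ?_⟩
            rw [hAm k hk]
            refine ⟨(ratio_pos hv hj0 x).2 (hx.2 j hj0), hj1, hAm, fun l hl => ?_⟩
            have hl0 : l ∉ B₀ := fun h => hl ((hA l).2 (Or.inl h))
            refine lt_of_le_of_ne (hjmin l (Finset.mem_compl.2 hl0)) fun h => ?_
            exact hl ((hA l).2 (Or.inr h.symm))
        · intro B _ hBA
          split_ifs with h1 h2
          · exfalso
            apply hBA
            obtain ⟨i, hi, hi0⟩ := Finset.exists_of_ssubset h2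
            obtain ⟨-, -, h3, h4⟩ := h1.2 i (Finset.mem_sdiff.2 ⟨hi, hi0⟩)
            have hij : ratio ℓ v j x = ratio ℓ v i x := by
              by_cases hjB : j ∈ B
              · exact h3 j (Finset.mem_sdiff.2 ⟨hjB, hj0⟩)
              · exact absurd (h4 j hjB) (not_lt.2 (hjmin i (Finset.mem_compl.2 hi0)))
            ext k
            rw [hA, hij]
            constructor
            · intro hk
              by_cases hk0 : k ∈ B₀
              · exact Or.inl hk0
              · exact Or.inr (h3 k (Finset.mem_sdiff.2 ⟨hk, hk0⟩))
            · rintro (hk | hk)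
              · exact h2.1 hk
              · by_contra hkB
                exact absurd hk (h4 k hkB).ne'
          · rfl
          · rfl
        · intro h; exact absurd (Finset.mem_univ A) h
    · rw [if_neg (fun h : x ∈ ({v} : Set (Fin n → ℝ)) => hx (Set.mem_singleton_iff.1 h ▸ hv)),
        if_neg hx, Finset.sum_eq_zero]
      · norm_num
      · intro B _
        split_ifs with h1 h2
        · exact absurd (openCone_subset hv h2 h1) hx
        · rfl
        · rfl
  have hrel := RelOpen.chi_relation hC c fun x => by
    rw [Fintype.sum_option, Fintype.sum_option]
    convert hpt x <;> rfl
  simp only [Fintype.sum_option, C, c, Option.elim] at hrel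
  have hsingle : chi ({v} : Set (Fin n → ℝ)) = 1 := by
    rw [chi, if_pos (Set.singleton_nonempty v), sdim, direction_affineSpan, vectorSpan_singleton,
      finrank_bot, pow_zero]
  have hsum : ∑ B : Finset (Fin m), (if B₀ ⊂ B then (1 : ℤ) else 0) * chi (openCone ℓ v B₀ B) =
      - ∑ B ∈ Finset.univ.filter (fun B => B₀ ⊂ B), chi (cell ℓ B) := by
    rw [Finset.sum_filter, ← Finset.sum_neg_distrib]
    refine Finset.sum_congr rfl fun B _ => ?_
    split_ifs with h
    · rw [chi_openCone hv h, one_mul]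
    · simp
  have hins : Finset.univ.filter (fun B : Finset (Fin m) => B₀ ⊆ B) =
      insert B₀ (Finset.univ.filter fun B => B₀ ⊂ B) := by
    ext B
    simp only [Finset.mem_filter, Finset.mem_univ, true_and, Finset.mem_insert]
    rw [subset_iff_ssubset_or_eq, or_comm, eq_comm]
  rw [hins, Finset.sum_insert (by simp)]
  rw [hsingle, hsum] at hrel
  linarith

end Euler

/-! ### Faces and their relative interiors -/

section Faces

variable {n m : ℕ} (a : Fin m → Fin n → ℝ) (b : Fin m → ℝ)

/-- The affine function `x ↦ ⟨a i, x⟩ + b i`. -/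
def ell (i : Fin m) : (Fin n → ℝ) →ᵃ[ℝ] ℝ :=
  (∑ j, a i j • (LinearMap.proj j : (Fin n → ℝ) →ₗ[ℝ] ℝ)).toAffineMap + AffineMap.const ℝ _ (b i)

lemma ell_apply (i : Fin m) (x : Fin n → ℝ) : ell a b i x = (∑ j, a i j * x j) + b i := by
  simp [ell]

lemma mem_polytope {x : Fin n → ℝ} : x ∈ polytope n m a b ↔ ∀ i, 0 ≤ ell a b i x := by
  simp [polytope, ell_apply]

lemma mem_faceOf {S : Finset (Fin m)} {x : Fin n → ℝ} :
    x ∈ faceOf n m a b S ↔ (∀ i, 0 ≤ ell a b i x) ∧ ∀ i ∈ S, ell a b i x = 0 := by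
  simp only [faceOf, facet, Set.mem_inter_iff, Set.mem_iInter, Set.mem_ofPred_eq, mem_polytope,
    ell_apply]
  constructor
  · rintro ⟨h1, h2⟩
    exact ⟨h1, fun i hi => (h2 i hi).2⟩
  · rintro ⟨h1, h2⟩
    exact ⟨h1, fun i hi => ⟨h1, h2 i hi⟩⟩

lemma mem_properFaces {G : Set (Fin n → ℝ)} : G ∈ properFaces n m a b ↔
    ∃ S : Finset (Fin m), (S.Nonempty ∧ (faceOf n m a b S).Nonempty) ∧ faceOf n m a b S = G := by
  simp [properFaces]

lemma cell_subset_faceOf (B : Finset (Fin m)) : cell (ell a b) B ⊆ faceOf n m a b B := by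
  rintro x ⟨h1, h2⟩
  rw [mem_faceOf]
  refine ⟨fun i => ?_, h1⟩
  by_cases hi : i ∈ B
  · exact (h1 i hi).ge
  · exact (h2 i hi).le

/-- The set of inequalities that are equalities on all of `G`. -/
def active (G : Set (Fin n → ℝ)) : Finset (Fin m) :=
  Finset.univ.filter fun i => ∀ x ∈ G, ell a b i x = 0

variable {a b}

lemma mem_active {G : Set (Fin n → ℝ)} {i : Fin m} :
    i ∈ active a b G ↔ ∀ x ∈ G, ell a b i x = 0 := by simp [active]

lemma subset_active (S : Finset (Fin m)) : S ⊆ active a b (faceOf n m a b S) := fun i hi =>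
  mem_active.2 fun _ hx => ((mem_faceOf a b).1 hx).2 i hi

lemma faceOf_active {G : Set (Fin n → ℝ)} (hG : G ∈ properFaces n m a b) :
    faceOf n m a b (active a b G) = G := by
  obtain ⟨S, -, rfl⟩ := (mem_properFaces a b).1 hG
  ext x
  constructor
  · intro hx
    rw [mem_faceOf] at hx ⊢
    exact ⟨hx.1, fun i hi => hx.2 i (subset_active S hi)⟩
  · intro hx
    exact (mem_faceOf a b).2 ⟨((mem_faceOf a b).1 hx).1, fun i hi => mem_active.1 hi x hx⟩

lemma active_faceOf {B : Finset (Fin m)} (hB : (cell (ell a b) B).Nonempty) :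
    active a b (faceOf n m a b B) = B := by
  obtain ⟨x, hx⟩ := hB
  refine Finset.Subset.antisymm (fun i hi => ?_) (subset_active B)
  by_contra hiB
  exact (hx.2 i hiB).ne' (mem_active.1 hi x (cell_subset_faceOf a b B hx))

/-- Every face has a relative interior point. -/
lemma cell_active_nonempty {G : Set (Fin n → ℝ)} (hG : G ∈ properFaces n m a b) :
    (cell (ell a b) (active a b G)).Nonempty := by
  obtain ⟨S, ⟨-, x₀, hx₀⟩, hS⟩ := (mem_properFaces a b).1 hG
  have key : ∀ K : Finset (Fin m), ∃ v ∈ faceOf n m a b S,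
      ∀ i ∈ K, i ∉ active a b G → 0 < ell a b i v := by
    intro K
    induction K using Finset.induction_on with
    | empty => exact ⟨x₀, hx₀, by simp⟩
    | insert i K _ ih =>
      obtain ⟨v, hv, hvK⟩ := ih
      by_cases hi : i ∈ active a b G
      · refine ⟨v, hv, fun k hk hka => ?_⟩
        rcases Finset.mem_insert.1 hk with rfl | hk
        · exact absurd hi hka
        · exact hvK k hk hka
      · have hex : ∃ x ∈ faceOf n m a b S, ell a b i x ≠ 0 := by
          rw [mem_active, ← hS] at hi
          push Not at hi
          exact hi
        obtain ⟨x, hx, hxi⟩ := hex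
        rw [mem_faceOf] at hx hv
        have hval : ∀ k, ell a b k (v + (1 / 2 : ℝ) • (x - v)) =
            ell a b k v / 2 + ell a b k x / 2 := fun k => by
          rw [affine_add_smul_sub]; ring
        refine ⟨v + (1 / 2 : ℝ) • (x - v), (mem_faceOf a b).2 ⟨fun k => ?_, fun k hk => ?_⟩,
          fun k hk hka => ?_⟩
        · rw [hval]; linarith [hx.1 k, hv.1 k]
        · rw [hval, hx.2 k hk, hv.2 k hk]; simp
        · rw [hval]
          rcases Finset.mem_insert.1 hk with rfl | hk
          · linarith [hv.1 k, lt_of_le_of_ne (hx.1 k) hxi.symm]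
          · linarith [hx.1 k, hvK k hk hka]
  obtain ⟨v, hv, hvK⟩ := key Finset.univ
  exact ⟨v, fun i hi => mem_active.1 hi v (hS ▸ hv), fun i hi => hvK i (Finset.mem_univ i) hi⟩

lemma cell_active_subset {G : Set (Fin n → ℝ)} (hG : G ∈ properFaces n m a b) :
    cell (ell a b) (active a b G) ⊆ G := by
  conv_rhs => rw [← faceOf_active hG]
  exact cell_subset_faceOf a b _

lemma mem_direction {G : Set (Fin n → ℝ)} (hG : G ∈ properFaces n m a b) (w : Fin n → ℝ) :
    w ∈ (affineSpan ℝ G).direction ↔ ∀ i ∈ active a b G, (ell a b i).linear w = 0 := by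
  obtain ⟨v, hv⟩ := cell_active_nonempty hG
  obtain ⟨W, hW, hWm⟩ := relOpen_cell (ell a b) (active a b G)
  rw [direction_eq_of v (cell_active_subset hG hv) _
    (fun w hw => (hW.op v hv w hw).mono fun t ht => cell_active_subset hG ht), hWm]
  intro x hx y hy
  rw [hWm]
  intro i hi
  rw [affine_sub, mem_active.1 hi x hx, mem_active.1 hi y hy, sub_zero]

lemma chi_cell_active {G : Set (Fin n → ℝ)} (hG : G ∈ properFaces n m a b) :
    chi (cell (ell a b) (active a b G)) = (-1) ^ sdim G := by
  obtain ⟨W, hW, hWm⟩ := relOpen_cell (ell a b) (active a b G)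
  have : (affineSpan ℝ G).direction = W := by
    ext w
    rw [mem_direction hG, hWm]
  rw [hW.chi_eq (cell_active_nonempty hG), sdim, this]

/-- A face strictly contained in another one has strictly smaller dimension. -/
lemma sdim_lt {G F : Set (Fin n → ℝ)} (hG : G ∈ properFaces n m a b) (hGF : G ⊆ F)
    (hF : F ∈ properFaces n m a b) (hne : G ≠ F) : sdim G < sdim F := by
  have hle := AffineSubspace.direction_le (affineSpan_mono ℝ hGF)
  refine lt_of_le_of_ne (Submodule.finrank_mono hle) fun heq => hne (hGF.antisymm fun y hy => ?_)
  have hdir := Submodule.eq_of_le_of_finrank_eq hle heq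
  obtain ⟨x, hx⟩ := (cell_active_nonempty hG).mono (cell_active_subset hG)
  have hmem : y - x ∈ (affineSpan ℝ G).direction := by
    rw [hdir, mem_direction hF]
    intro i hi
    rw [affine_sub, mem_active.1 hi y hy, mem_active.1 hi x (hGF hx), sub_zero]
  rw [← faceOf_active hG, mem_faceOf]
  rw [← faceOf_active hF, mem_faceOf] at hy
  refine ⟨hy.1, fun i hi => ?_⟩
  have := (mem_direction hG _).1 hmem i hi
  rwa [affine_sub, mem_active.1 hi x hx, sub_zero] at this

/-- Euler's relation for the faces contained in a given proper face `F`, including `F` itself. -/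
lemma euler_face (hcomp : IsCompact (polytope n m a b)) {F : Set (Fin n → ℝ)}
    (hF : F ∈ properFaces n m a b) :
    ∑ G ∈ (properFaces n m a b).filter (fun G => G ⊆ F), (-1 : ℤ) ^ sdim G = 1 := by
  obtain ⟨R, hR⟩ := hcomp.isBounded.exists_norm_le
  obtain ⟨v, hv⟩ := cell_active_nonempty hF
  refine Eq.trans ?_ (euler_relation hv (R := R) (fun x hx _ => hR x ((mem_polytope a b).2 hx)))
  rw [← Finset.sum_filter_of_ne (p := fun B => (cell (ell a b) B).Nonempty)]
  · refine Finset.sum_nbij' (active a b) (faceOf n m a b) ?_ ?_ ?_ ?_ ?_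
    · intro G hG
      obtain ⟨hG, hGF⟩ := Finset.mem_filter.1 hG
      simp only [Finset.mem_filter, Finset.mem_univ, true_and]
      exact ⟨fun i hi => mem_active.2 fun x hx => mem_active.1 hi x (hGF hx),
        cell_active_nonempty hG⟩
    · intro B hB
      simp only [Finset.mem_filter, Finset.mem_univ, true_and] at hB ⊢
      obtain ⟨S, ⟨hS, -⟩, hSF⟩ := (mem_properFaces a b).1 hF
      refine ⟨(mem_properFaces a b).2 ⟨B, ⟨?_, hB.2.mono (cell_subset_faceOf a b B)⟩, rfl⟩, ?_⟩
      · exact (hS.mono (hSF ▸ subset_active S)).mono hB.1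
      · intro x hx
        rw [← faceOf_active hF, mem_faceOf]
        rw [mem_faceOf] at hx
        exact ⟨hx.1, fun i hi => hx.2 i (hB.1 hi)⟩
    · intro G hG
      exact faceOf_active (Finset.mem_filter.1 hG).1
    · intro B hB
      exact active_faceOf (Finset.mem_filter.1 hB).2
    · intro G hG
      exact (chi_cell_active (Finset.mem_filter.1 hG).1).symm
  · intro B _ hB
    by_contra hne
    exact hB (if_neg hne)

end Faces

/-! ### Summation over the facets -/

/-- The Bayer–Billera relation
`f_{n-1} (1 + (-1)^n) = Σ_{i=0}^{n-2} (-1)^i f_{{i,n-1}}`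
for a convex polytope `P ⊂ ℝⁿ`, `n ≥ 2`, where `f_{{i}}` counts the `i`-dimensional
proper faces and `f_{{i,n-1}}` counts pairs `G ⊆ F` of proper faces with
`dim G = i`, `dim F = n-1`. -/
theorem bayer_billera_relation
    (n m : ℕ) (hn : 2 ≤ n) (hm : 1 ≤ m)
    (a : Fin m → Fin n → ℝ) (b : Fin m → ℝ)
    (hcomp : IsCompact (polytope n m a b))
    (hint : (interior (polytope n m a b)).Nonempty)
    (hfacet : ∀ i, sdim (facet n m a b i) = n - 1)
    (hdist : ∀ i j : Fin m, i ≠ j → facet n m a b i ≠ facet n m a b j) :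
    (((properFaces n m a b).filter fun G => sdim G = n - 1).card : ℤ) * (1 + (-1) ^ n) =
      ∑ i ∈ Finset.range (n - 1), (-1 : ℤ) ^ i *
        ((((properFaces n m a b) ×ˢ (properFaces n m a b)).filter fun p =>
            p.1 ⊆ p.2 ∧ sdim p.1 = i ∧ sdim p.2 = n - 1).card : ℤ) := by
  have hcard : ∀ i : ℕ, ((((properFaces n m a b) ×ˢ (properFaces n m a b)).filter fun p =>
      p.1 ⊆ p.2 ∧ sdim p.1 = i ∧ sdim p.2 = n - 1).card : ℤ) =
      ∑ F ∈ (properFaces n m a b).filter (fun F => sdim F = n - 1),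
        ∑ G ∈ (properFaces n m a b).filter (fun G => G ⊆ F), if sdim G = i then 1 else 0 := by
    intro i
    rw [Finset.card_filter, Nat.cast_sum, Finset.sum_product_right, Finset.sum_filter]
    refine Finset.sum_congr rfl fun F _ => ?_
    rw [Finset.sum_filter]
    by_cases hF : sdim F = n - 1
    · rw [if_pos hF]
      refine Finset.sum_congr rfl fun G _ => ?_
      by_cases h1 : G ⊆ F <;> by_cases h2 : sdim G = i <;> simp [h1, h2, hF]
    · simp [hF]
  simp_rw [hcard, Finset.mul_sum]
  rw [Finset.sum_comm, Finset.card_eq_sum_ones, Nat.cast_sum, Finset.sum_mul]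
  refine Finset.sum_congr rfl fun F hF => ?_
  obtain ⟨hF, hFd⟩ := Finset.mem_filter.1 hF
  have hterm : ∀ G ∈ (properFaces n m a b).filter (fun G => G ⊆ F),
      ∑ i ∈ Finset.range (n - 1), (-1 : ℤ) ^ i * (if sdim G = i then 1 else 0) =
        (-1) ^ sdim G - if G = F then (-1) ^ (n - 1) else 0 := by
    intro G hG
    obtain ⟨hG, hGF⟩ := Finset.mem_filter.1 hG
    simp only [mul_ite, mul_one, mul_zero, Finset.sum_ite_eq, Finset.mem_range]
    by_cases h : G = F
    · subst h
      simp [hFd]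
    · have := sdim_lt hG hGF hF h
      rw [hFd] at this
      simp [h, this]
  have hFF : F ∈ (properFaces n m a b).filter (fun G => G ⊆ F) :=
    Finset.mem_filter.2 ⟨hF, Set.Subset.refl F⟩
  rw [Finset.sum_comm, Finset.sum_congr rfl hterm, Finset.sum_sub_distrib, euler_face hcomp hF,
    Finset.sum_ite_eq', if_pos hFF]
  obtain ⟨k, rfl⟩ : ∃ k, n = k + 1 := ⟨n - 1, by omega⟩
  simp [pow_succ, sub_eq_add_neg]
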